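/- arXiv:1311.5626 — 2 statements merged into one kernel-verified Lean document; each statement's English description precedes it below -/
import Mathlib

section
/- For every n≥1, Z_n(n−1) = C_{n−1}, i.e. the number of elements of 𝔗_n of maximal weight n−1 equals the (n−1)-st Catalan number. -/
/-- The set 𝔗ₙ, encoded as lists of pairs `(i_j, k_j)`:
entries satisfy `1 ≤ i_j - k_j` (i.e. `k_j < i_j`) and `i_j ≤ n-1` (i.e. `i_j + 1 ≤ n`),
the `i_j` are strictly increasing, and the `i_j - k_j` are strictly increasing. -/
def IsTT (n : ℕ) (l : List (ℕ × ℕ)) : Prop :=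
  (∀ p ∈ l, p.2 < p.1 ∧ p.1 + 1 ≤ n) ∧
  List.Chain' (· < ·) (l.map Prod.fst) ∧
  List.Chain' (· < ·) (l.map (fun p => p.1 - p.2))

/-- The set of integers covered by the intervals `[i_j - k_j, i_j]`. -/
def cov (l : List (ℕ × ℕ)) : Finset ℕ :=
  l.foldr (fun p s => Finset.Icc (p.1 - p.2) p.1 ∪ s) ∅

/-- The weight of an element of 𝔗ₙ. -/
def wt (l : List (ℕ × ℕ)) : ℕ := (cov l).card

/-- `Z n m` is the number of elements of 𝔗ₙ of weight `m`. -/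
noncomputable def Z (n m : ℕ) : ℕ :=
  Nat.card {l : List (ℕ × ℕ) // IsTT n l ∧ wt l = m}

open DyckStep

/-- `IsDyckSuffix N d u w`: appending `w` to a prefix with `d` down steps and `u` up steps
gives a Dyck path of semilength `N`. -/
def IsDyckSuffix (N : ℕ) : ℕ → ℕ → List DyckStep → Prop
  | d, u, [] => d = N ∧ u = N
  | d, u, U :: w => IsDyckSuffix N d (u + 1) w
  | d, u, D :: w => d < u ∧ IsDyckSuffix N (d + 1) u w

/-- The peaks of a path: a peak reached after `d` down steps and `i` up steps is recorded as the
interval `[d + 1, i]`, that is, as the pair `(i, i - (d + 1))`. -/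
def peaks : ℕ → ℕ → List DyckStep → List (ℕ × ℕ)
  | _, _, [] => []
  | d, u, D :: w => peaks (d + 1) u w
  | _, _, [U] => []
  | d, u, U :: D :: w => (u + 1, u - d) :: peaks (d + 1) (u + 1) w
  | d, u, U :: U :: w => peaks d (u + 1) (U :: w)

/-- `IsCover N d u l`: the intervals of `l` have strictly increasing left endpoints exceeding `d`
and strictly increasing right endpoints exceeding `u`, and they leave no gap in `[u + 1, N]`. -/
def IsCover (N : ℕ) : ℕ → ℕ → List (ℕ × ℕ) → Prop
  | _, u, [] => u = N
  | d, u, p :: l => p.2 < p.1 ∧ d < p.1 - p.2 ∧ p.1 - p.2 ≤ u + 1 ∧ u < p.1 ∧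
      IsCover N (p.1 - p.2) p.1 l

lemma IsCover.le {N d u : ℕ} {l : List (ℕ × ℕ)} (h : IsCover N d u l) : u ≤ N := by
  induction l generalizing d u with
  | nil => exact le_of_eq h
  | cons p l ih =>
    obtain ⟨-, -, -, h₁, h₂⟩ := h
    exact h₁.le.trans (ih h₂)

lemma isCover_iff {N d u : ℕ} {l : List (ℕ × ℕ)} (hu : u ≤ N) :
    IsCover N d u l ↔
      (∀ p ∈ l, p.2 < p.1 ∧ p.1 ≤ N ∧ d < p.1 - p.2 ∧ u < p.1) ∧
      l.Pairwise (fun p q => p.1 < q.1) ∧ l.Pairwise (fun p q => p.1 - p.2 < q.1 - q.2) ∧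
      ∀ x, u < x → x ≤ N → ∃ p ∈ l, p.1 - p.2 ≤ x ∧ x ≤ p.1 := by
  induction l generalizing d u with
  | nil =>
    simp only [IsCover, List.not_mem_nil, false_and, exists_false]
    constructor
    · rintro rfl
      simp
    · rintro ⟨-, -, -, h⟩
      by_contra hne
      exact h N (by omega) le_rfl
  | cons p l ih =>
    simp only [IsCover, List.forall_mem_cons, List.pairwise_cons, List.exists_mem_cons_iff]
    constructor
    · rintro ⟨h₁, h₂, h₃, h₄, h₅⟩
      have hp := h₅.le
      obtain ⟨a, b, c, e⟩ := (ih hp).1 h₅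
      refine ⟨⟨⟨h₁, hp, h₂, h₄⟩, fun q hq => ?_⟩, ⟨fun q hq => (a q hq).2.2.2, b⟩,
        ⟨fun q hq => (a q hq).2.2.1, c⟩, fun x hx hxN => ?_⟩
      · have := a q hq
        omega
      · by_cases hxp : x ≤ p.1
        · exact Or.inl ⟨by omega, hxp⟩
        · exact Or.inr (e x (by omega) hxN)
    · rintro ⟨⟨⟨h₁, hp, h₂, h₄⟩, a⟩, ⟨b₁, b⟩, ⟨c₁, c⟩, e⟩
      refine ⟨h₁, h₂, ?_, h₄, (ih hp).2 ⟨fun q hq => ?_, b, c, fun x hx hxN => ?_⟩⟩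
      · rcases e (u + 1) (by omega) (by omega) with h | ⟨q, hq, h, -⟩
        · exact h.1
        · exact (c₁ q hq).le.trans h
      · exact ⟨(a q hq).1, (a q hq).2.1, c₁ q hq, b₁ q hq⟩
      · rcases e x (by omega) hxN with h | h
        · omega
        · exact h

lemma mem_cov {l : List (ℕ × ℕ)} {x : ℕ} :
    x ∈ cov l ↔ ∃ p ∈ l, p.1 - p.2 ≤ x ∧ x ≤ p.1 := by
  induction l with
  | nil => simp [cov]
  | cons p l ih =>
    have : cov (p :: l) = Finset.Icc (p.1 - p.2) p.1 ∪ cov l := rfl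
    rw [this, Finset.mem_union, ih, List.exists_mem_cons_iff, Finset.mem_Icc]

lemma wt_eq_iff {N : ℕ} {l : List (ℕ × ℕ)} (h : ∀ p ∈ l, p.2 < p.1 ∧ p.1 ≤ N) :
    wt l = N ↔ ∀ x, 0 < x → x ≤ N → x ∈ cov l := by
  have hsub : cov l ⊆ Finset.Icc 1 N := by
    intro x hx
    obtain ⟨p, hp, h₁, h₂⟩ := mem_cov.1 hx
    have := h p hp
    rw [Finset.mem_Icc]
    omega
  constructor
  · intro hw x hx hxN
    rw [Finset.eq_of_subset_of_card_le hsub (by simpa [wt] using hw.ge), Finset.mem_Icc]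
    exact ⟨hx, hxN⟩
  · intro hc
    have : cov l = Finset.Icc 1 N :=
      hsub.antisymm fun x hx => hc x (Finset.mem_Icc.1 hx).1 (Finset.mem_Icc.1 hx).2
    simp [wt, this]

lemma isTT_and_wt_eq_iff {N : ℕ} {l : List (ℕ × ℕ)} :
    IsTT (N + 1) l ∧ wt l = N ↔ IsCover N 0 0 l := by
  rw [isCover_iff N.zero_le, IsTT, List.Chain', List.Chain', List.isChain_iff_pairwise,
    List.isChain_iff_pairwise, List.pairwise_map, List.pairwise_map]
  simp only [← mem_cov, Nat.add_le_add_iff_right]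
  constructor
  · rintro ⟨⟨a, b, c⟩, hw⟩
    refine ⟨fun p hp => ?_, b, c, (wt_eq_iff a).1 hw⟩
    have := a p hp
    omega
  · rintro ⟨a, b, c, e⟩
    have ha : ∀ p ∈ l, p.2 < p.1 ∧ p.1 ≤ N := fun p hp => ⟨(a p hp).1, (a p hp).2.1⟩
    exact ⟨⟨ha, b, c⟩, (wt_eq_iff ha).2 e⟩

lemma exists_peaks_U_cons {N d u : ℕ} {w : List DyckStep} (hdu : d ≤ u)
    (h : IsDyckSuffix N d u (U :: w)) :
    ∃ p l, peaks d u (U :: w) = p :: l ∧ p.1 - p.2 = d + 1 ∧ u < p.1 := by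
  induction w generalizing u with
  | nil =>
    simp only [IsDyckSuffix] at h
    omega
  | cons s w ih =>
    cases s with
    | U =>
      obtain ⟨p, l, h₁, h₂, h₃⟩ := ih (hdu.trans u.le_succ) h
      exact ⟨p, l, by rw [peaks, h₁], h₂, by omega⟩
    | D => exact ⟨_, _, by rw [peaks], by dsimp only; omega, Nat.lt_succ_self u⟩

lemma IsDyckSuffix.isCover_peaks {N d u : ℕ} {w : List DyckStep} (hdu : d ≤ u)
    (h : IsDyckSuffix N d u w) : IsCover N d u (peaks d u w) := by
  fun_induction peaks d u w with
  | case1 d u => exact h.2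
  | case2 d u w ih =>
    have hc := ih h.1 h.2
    revert hc
    cases peaks (d + 1) u w with
    | nil => exact id
    | cons p l =>
      rintro ⟨h₁, h₂, h₃⟩
      exact ⟨h₁, by omega, h₃⟩
  | case3 d u =>
    simp only [IsDyckSuffix] at h
    omega
  | case4 d u w ih =>
    have hc := ih (by omega) h.2
    have he : u + 1 - (u - d) = d + 1 := by omega
    simp only [IsCover, he]
    exact ⟨by omega, by omega, by omega, by omega, hc⟩
  | case5 d u w ih =>
    have hc := ih (by omega) h
    obtain ⟨p, l, h₁, h₂, h₃⟩ := exists_peaks_U_cons (hdu.trans u.le_succ) h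
    rw [h₁] at hc ⊢
    exact ⟨hc.1, hc.2.1, by omega, by omega, hc.2.2.2.2⟩

lemma peaks_U_cons_ne_peaks_D_cons {N d u : ℕ} {v w : List DyckStep} (hdu : d ≤ u)
    (hv : IsDyckSuffix N d u (U :: v)) (hw : IsDyckSuffix N d u (D :: w)) :
    peaks d u (U :: v) ≠ peaks d u (D :: w) := by
  intro he
  obtain ⟨p, l, h₁, h₂, -⟩ := exists_peaks_U_cons hdu hv
  have hc := hw.2.isCover_peaks hw.1
  rw [show peaks (d + 1) u w = p :: l by rw [← h₁, he, peaks]] at hc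
  have := hc.2.1
  omega

lemma IsDyckSuffix.le {N d u : ℕ} {w : List DyckStep} (h : IsDyckSuffix N d u w) :
    d ≤ N ∧ u ≤ N := by
  induction w generalizing d u with
  | nil => exact ⟨h.1.le, h.2.le⟩
  | cons s w ih =>
    cases s with
    | U => exact ⟨(ih h).1, (Nat.le_succ u).trans (ih h).2⟩
    | D => exact ⟨(Nat.le_succ d).trans (ih h.2).1, (ih h.2).2⟩

lemma IsDyckSuffix.peaks_injective {N d u : ℕ} {v w : List DyckStep} (hdu : d ≤ u)
    (hv : IsDyckSuffix N d u v) (hw : IsDyckSuffix N d u w)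
    (he : peaks d u v = peaks d u w) : v = w := by
  fun_induction peaks d u v generalizing w with
  | case1 d u =>
    obtain ⟨rfl, rfl⟩ := hv
    rcases w with _ | ⟨s, w⟩
    · rfl
    · cases s with
      | U => exact absurd (IsDyckSuffix.le (w := w) hw).2 (by omega)
      | D => exact absurd hw.1 (lt_irrefl _)
  | case2 d u v ih =>
    rcases w with _ | ⟨s, w⟩
    · exact absurd hv.1 (by have := hw.1; have := hw.2; omega)
    · cases s with
      | U => exact absurd he.symm (peaks_U_cons_ne_peaks_D_cons hdu hw hv)
      | D => rw [ih hv.1 hv.2 hw.2 (by rw [he, peaks])]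
  | case3 d u =>
    simp only [IsDyckSuffix] at hv
    omega
  | case4 d u v ih =>
    rcases w with _ | ⟨_ | _, w⟩
    · simp [peaks] at he
    · rcases w with _ | ⟨_ | _, w⟩
      · simp [peaks] at he
      · obtain ⟨p, l, h₁, h₂, h₃⟩ := exists_peaks_U_cons (hdu.trans u.le_succ) hw
        rw [peaks, h₁, List.cons.injEq] at he
        rw [← he.1] at h₃
        exact absurd h₃ (lt_irrefl _)
      · rw [peaks, List.cons.injEq] at he
        rw [ih (by omega) hv.2 hw.2 he.2]
    · exact absurd (by rw [← he, peaks]) (peaks_U_cons_ne_peaks_D_cons hdu hv hw)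
  | case5 d u v ih =>
    rcases w with _ | ⟨_ | _, w⟩
    · obtain ⟨p, l, h₁, -⟩ := exists_peaks_U_cons (hdu.trans u.le_succ) hv
      simp [h₁, peaks] at he
    · rcases w with _ | ⟨_ | _, w⟩
      · simp only [IsDyckSuffix] at hw
        omega
      · rw [ih (hdu.trans u.le_succ) hv hw (by rw [he, peaks])]
      · obtain ⟨p, l, h₁, h₂, h₃⟩ := exists_peaks_U_cons (hdu.trans u.le_succ) hv
        rw [peaks, h₁, List.cons.injEq] at he
        rw [he.1] at h₃
        exact absurd h₃ (lt_irrefl _)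
    · exact absurd (by rw [← he, peaks]) (peaks_U_cons_ne_peaks_D_cons hdu hv hw)

lemma IsCover.exists_peaks_eq {N d u : ℕ} {l : List (ℕ × ℕ)} (hdu : d ≤ u)
    (h : IsCover N d u l) : ∃ w, IsDyckSuffix N d u w ∧ peaks d u w = l := by
  have huN := h.le
  rcases l with _ | ⟨⟨i, k⟩, l⟩
  · have hu : u = N := h
    rcases hdu.eq_or_lt with rfl | hlt
    · exact ⟨[], ⟨hu, hu⟩, by rw [peaks]⟩
    · obtain ⟨w, h₁, h₂⟩ := IsCover.exists_peaks_eq (d := d + 1) (l := []) hlt h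
      exact ⟨D :: w, ⟨hlt, h₁⟩, by rw [peaks, h₂]⟩
  · have hiN : i ≤ N := h.2.2.2.2.le
    obtain ⟨h₁, h₂, h₃, h₄, h₅⟩ := h
    dsimp only at h₁ h₂ h₃ h₄ h₅
    by_cases hd : d + 1 < i - k
    · obtain ⟨w, hw, he⟩ := IsCover.exists_peaks_eq (d := d + 1) (u := u) (l := (i, k) :: l)
        (by omega) ⟨h₁, hd, h₃, h₄, h₅⟩
      exact ⟨D :: w, ⟨by omega, hw⟩, by rw [peaks, he]⟩
    · have hda : i - k = d + 1 := by omega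
      by_cases hi : u + 1 < i
      · obtain ⟨w, hw, he⟩ := IsCover.exists_peaks_eq (d := d) (u := u + 1) (l := (i, k) :: l)
          (by omega) ⟨h₁, h₂, by dsimp only; omega, hi, h₅⟩
        rcases w with _ | ⟨_ | _, w⟩
        · simp [peaks] at he
        · exact ⟨U :: U :: w, hw, by rw [peaks, he]⟩
        · have hc := hw.2.isCover_peaks hw.1
          rw [show peaks (d + 1) (u + 1) w = (i, k) :: l by rw [← he, peaks]] at hc
          exact absurd hc.2.1 hd
      · obtain rfl : i = u + 1 := by omega
        obtain rfl : k = u - d := by omega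
        rw [hda] at h₅
        obtain ⟨w, hw, he⟩ := IsCover.exists_peaks_eq (by omega) h₅
        exact ⟨U :: D :: w, ⟨by omega, hw⟩, by rw [peaks, he]⟩
termination_by 2 * N - d - u
decreasing_by all_goals omega

lemma isDyckSuffix_iff {N d u : ℕ} {w : List DyckStep} (hdu : d ≤ u) :
    IsDyckSuffix N d u w ↔ d + w.count D = N ∧ u + w.count U = N ∧
      ∀ i, d + (w.take i).count D ≤ u + (w.take i).count U := by
  induction w generalizing d u with
  | nil => simp [IsDyckSuffix, hdu]
  | cons s w ih =>
    cases s with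
    | U =>
      rw [IsDyckSuffix, ih (hdu.trans u.le_succ)]
      simp only [List.count_cons_self, List.count_cons_of_ne (show U ≠ D by decide)]
      refine and_congr Iff.rfl (and_congr (by omega) ⟨fun h i => ?_, fun h i => ?_⟩)
      · rcases i with _ | i
        · simpa using hdu
        · have := h i
          simp only [List.take_succ_cons, List.count_cons_self,
            List.count_cons_of_ne (show U ≠ D by decide)]
          omega
      · have := h (i + 1)
        simp only [List.take_succ_cons, List.count_cons_self,
          List.count_cons_of_ne (show U ≠ D by decide)] at this
        omega
    | D =>
      simp only [IsDyckSuffix, List.count_cons_self, List.count_cons_of_ne (show D ≠ U by decide)]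
      constructor
      · rintro ⟨hlt, h⟩
        obtain ⟨h₁, h₂, h₃⟩ := (ih hlt).1 h
        refine ⟨by omega, h₂, fun i => ?_⟩
        rcases i with _ | i
        · simpa using hdu
        · have := h₃ i
          simp only [List.take_succ_cons, List.count_cons_self,
            List.count_cons_of_ne (show D ≠ U by decide)]
          omega
      · rintro ⟨h₁, h₂, h₃⟩
        have hlt : d < u := by simpa using h₃ 1
        refine ⟨hlt, (ih hlt).2 ⟨by omega, h₂, fun i => ?_⟩⟩
        have := h₃ (i + 1)
        simp only [List.take_succ_cons, List.count_cons_self,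
          List.count_cons_of_ne (show D ≠ U by decide)] at this
        omega

lemma DyckWord.isDyckSuffix {N : ℕ} {p : DyckWord} (h : p.semilength = N) :
    IsDyckSuffix N 0 0 p.toList :=
  (isDyckSuffix_iff le_rfl).2
    ⟨by simp [← h, p.semilength_eq_count_D], by simp [← h, semilength],
      by simpa using p.count_D_le_count_U⟩

lemma IsDyckSuffix.exists_dyckWord {N : ℕ} {w : List DyckStep} (h : IsDyckSuffix N 0 0 w) :
    ∃ p : DyckWord, p.semilength = N ∧ p.toList = w := by
  obtain ⟨h₁, h₂, h₃⟩ := (isDyckSuffix_iff le_rfl).1 h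
  exact ⟨⟨w, by omega, by simpa using h₃⟩, by simpa [DyckWord.semilength] using h₂, rfl⟩

/-- Dyck words of semilength `N` correspond to gapless covers of `[1, N]` through their peaks. -/
noncomputable def dyckWordEquivCover (N : ℕ) :
    {p : DyckWord // p.semilength = N} ≃ {l : List (ℕ × ℕ) // IsCover N 0 0 l} :=
  Equiv.ofBijective
    (fun p => ⟨peaks 0 0 p.1.toList, (DyckWord.isDyckSuffix p.2).isCover_peaks le_rfl⟩) <| by
    constructor
    · rintro ⟨p, hp⟩ ⟨q, hq⟩ he
      exact Subtype.ext <| DyckWord.ext <|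
        (DyckWord.isDyckSuffix hp).peaks_injective le_rfl (DyckWord.isDyckSuffix hq) (Subtype.ext_iff.1 he)
    · rintro ⟨l, hl⟩
      obtain ⟨w, hw, he⟩ := hl.exists_peaks_eq le_rfl
      obtain ⟨p, hp, rfl⟩ := hw.exists_dyckWord
      exact ⟨⟨p, hp⟩, Subtype.ext he⟩

theorem stmt7 (n : ℕ) (hn : 1 ≤ n) :
    Z n (n - 1) = catalan (n - 1) := by
  obtain ⟨N, rfl⟩ := Nat.exists_eq_add_of_le' hn
  rw [Nat.add_sub_cancel, Z, ← DyckWord.card_dyckWord_semilength_eq_catalan,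
    ← Nat.card_eq_fintype_card]
  simp only [isTT_and_wt_eq_iff]
  exact (Nat.card_congr (dyckWordEquivCover N)).symm
end

section
/- In the Yokonuma–Temperley–Lieb algebra YTL_{d,n}(u) (n≥3), the following relations hold: (1) (t_i−t_j)(t_i−t_k)(t_j−t_k) = 0 for all 1≤i,j,k≤n; (2) (t_j−t_i)(t_j−t_{i+1})(g_i+1) = 0 for all 1≤i≤n−1 and all 1≤j≤n. -/
noncomputable section

/-- The field `K = ℂ(u)` of rational functions over `ℂ`. -/
abbrev K : Type := RatFunc ℂ

/-- The indeterminate `u ∈ ℂ(u)`. -/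
def uu : K := RatFunc.X

/-- The free `K`-algebra on generators `g_i` (`i : ℕ`, left summand) and `t_j`
(`j : ℕ`, right summand); the generators with invalid indices are killed by the relations. -/
abbrev FA : Type := FreeAlgebra K (ℕ ⊕ ℕ)

/-- The free generator `g_i`. -/
def Gf (i : ℕ) : FA := FreeAlgebra.ι K (Sum.inl i)

/-- The free generator `t_j`. -/
def Tf (j : ℕ) : FA := FreeAlgebra.ι K (Sum.inr j)

/-- The element `e_i = (1/d) ∑_{s=0}^{d-1} t_i^s t_{i+1}^{d-s}`. -/
def ef (d i : ℕ) : FA :=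
  ((d : K)⁻¹) • ∑ s ∈ Finset.range d, Tf i ^ s * Tf (i + 1) ^ (d - s)

/-- The transposition `s_i = (i, i+1)` applied to `j`. -/
def swapIdx (i j : ℕ) : ℕ := if j = i then i + 1 else if j = i + 1 then i else j

/-- The defining relations of the Yokonuma–Hecke algebra `Y_{d,n}(u)`, together with junk
relations killing the generators with out-of-range indices (so that the quotient is presented
exactly by `g_1, …, g_{n-1}, t_1, …, t_n`). -/
inductive YRel (d n : ℕ) : FA → FA → Prop
  | commute (i j : ℕ) (hi : 1 ≤ i) (hin : i + 1 ≤ n) (hj : 1 ≤ j) (hjn : j + 1 ≤ n)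
      (hfar : i + 1 < j ∨ j + 1 < i) :
      YRel d n (Gf i * Gf j) (Gf j * Gf i)
  | braid (i : ℕ) (hi : 1 ≤ i) (hin : i + 2 ≤ n) :
      YRel d n (Gf i * Gf (i + 1) * Gf i) (Gf (i + 1) * Gf i * Gf (i + 1))
  | tcomm (i j : ℕ) (hi : 1 ≤ i) (hin : i ≤ n) (hj : 1 ≤ j) (hjn : j ≤ n) :
      YRel d n (Tf i * Tf j) (Tf j * Tf i)
  | tg (i j : ℕ) (hi : 1 ≤ i) (hin : i + 1 ≤ n) (hj : 1 ≤ j) (hjn : j ≤ n) :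
      YRel d n (Tf j * Gf i) (Gf i * Tf (swapIdx i j))
  | torder (j : ℕ) (hj : 1 ≤ j) (hjn : j ≤ n) :
      YRel d n (Tf j ^ d) 1
  | quad (i : ℕ) (hi : 1 ≤ i) (hin : i + 1 ≤ n) :
      YRel d n (Gf i ^ 2) (1 + (uu - 1) • ef d i + (uu - 1) • (ef d i * Gf i))
  | gjunk (i : ℕ) (h : i = 0 ∨ n ≤ i) : YRel d n (Gf i) 0
  | tjunk (j : ℕ) (h : j = 0 ∨ n < j) : YRel d n (Tf j) 0

/-- The Yokonuma–Hecke algebra `Y_{d,n}(u)`. -/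
abbrev YH (d n : ℕ) : Type := RingQuot (YRel d n)

/-- The generator `g_i` of `Y_{d,n}(u)`. -/
def yg (d n : ℕ) (i : ℕ) : YH d n := RingQuot.mkAlgHom K (YRel d n) (Gf i)

/-- The generator `t_j` of `Y_{d,n}(u)`. -/
def yt (d n : ℕ) (j : ℕ) : YH d n := RingQuot.mkAlgHom K (YRel d n) (Tf j)

/-- The idempotent `e_i ∈ Y_{d,n}(u)`. -/
def ye (d n : ℕ) (i : ℕ) : YH d n := RingQuot.mkAlgHom K (YRel d n) (ef d i)

end

/-- The defining relations of the Yokonuma–Temperley–Lieb algebra `YTL_{d,n}(u)`: the relations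
of `Y_{d,n}(u)` together with
`g_i g_{i+1} g_i + g_i g_{i+1} + g_{i+1} g_i + g_i + g_{i+1} + 1 = 0` for `1 ≤ i ≤ n-2`. -/
inductive YTLRel (d n : ℕ) : FA → FA → Prop
  | base {a b : FA} : YRel d n a b → YTLRel d n a b
  | tl (i : ℕ) (hi : 1 ≤ i) (hin : i + 2 ≤ n) :
      YTLRel d n
        (Gf i * Gf (i + 1) * Gf i + Gf i * Gf (i + 1) + Gf (i + 1) * Gf i +
          Gf i + Gf (i + 1) + 1) 0

/-- The Yokonuma–Temperley–Lieb algebra `YTL_{d,n}(u)`, the quotient of `Y_{d,n}(u)` by the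
two-sided ideal generated by the elements
`g_i g_{i+1} g_i + g_i g_{i+1} + g_{i+1} g_i + g_i + g_{i+1} + 1`, `1 ≤ i ≤ n-2`. -/
abbrev YTL (d n : ℕ) : Type := RingQuot (YTLRel d n)

/-- The image of the generator `g_i` in `YTL_{d,n}(u)`. -/
noncomputable def zg (d n : ℕ) (i : ℕ) : YTL d n :=
  RingQuot.mkAlgHom K (YTLRel d n) (Gf i)

/-- The image of the generator `t_j` in `YTL_{d,n}(u)`. -/
noncomputable def zt (d n : ℕ) (j : ℕ) : YTL d n :=
  RingQuot.mkAlgHom K (YTLRel d n) (Tf j)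

section RingLemmas

variable {R : Type*} [Ring R] {a b c g h : R}

/-- The relation `(t_j - t_i)(t_j - t_{i+1})(g_i + 1) = 0` for three neighbouring strands,
the distinguished one being the last. -/
lemma sub_mul_sub_mul_left_add_one (hab : a * b = b * a) (hbc : b * c = c * b)
    (ag : a * g = g * b) (cg : c * g = g * c) (bh : b * h = h * c)
    (hr : g * h * g + g * h + h * g + g + h + 1 = 0) :
    (c - a) * (c - b) * (g + 1) = 0 := by
  have key : (c - a) * (c - b) * (g + 1) =
      a * b * (g * h * g + g * h + h * g + g + h + 1)
      - a * (g * h * g + g * h + h * g + g + h + 1) * c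
      - b * (g * h * g + g * h + h * g + g + h + 1) * c
      + (g * h * g + g * h + h * g + g + h + 1) * c * c := by
    have gb' (x : R) : g * (b * x) = a * (g * x) := by rw [← mul_assoc, ← ag, mul_assoc]
    have hc' (x : R) : h * (c * x) = b * (h * x) := by rw [← mul_assoc, ← bh, mul_assoc]
    have ba' (x : R) : b * (a * x) = a * (b * x) := by rw [← mul_assoc, ← hab, mul_assoc]
    simp only [mul_add, add_mul, mul_sub, sub_mul, mul_one, one_mul, mul_assoc, ← cg, ← bh, ← hbc,
      gb', hc', ba']
    abel
  simp [key, hr]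

/-- The relation `(t_j - t_i)(t_j - t_{i+1})(g_i + 1) = 0` for three neighbouring strands,
the distinguished one being the first. -/
lemma sub_mul_sub_mul_right_add_one (hab : a * b = b * a) (hac : a * c = c * a)
    (hbc : b * c = c * b) (bg : b * g = g * a) (ah : a * h = h * a) (ch : c * h = h * b)
    (hbraid : g * h * g = h * g * h) (hr : g * h * g + g * h + h * g + g + h + 1 = 0) :
    (a - b) * (a - c) * (h + 1) = 0 := by
  have hsymm : (a - b) * (a - c) = (a - c) * (a - b) := by
    simp only [mul_sub, sub_mul, hab, hac, hbc]
    abel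
  rw [hsymm]
  refine sub_mul_sub_mul_left_add_one hbc.symm hab.symm ch ah bg ?_
  rw [← hbraid, ← hr]
  abel

/-- A relation with right factor `g + 1` yields one among the elements `t_j` by twisted commutation. -/
lemma sub_mul_sub_mul_sub_eq_zero (hab : a * b = b * a) (hac : a * c = c * a)
    (ag : a * g = g * b) (hr : (c - a) * (c - b) * (g + 1) = 0) :
    (c - a) * (c - b) * (a - b) = 0 := by
  have h₁ : a * ((c - a) * (c - b)) = (c - a) * (c - b) * a :=
    (((Commute.sub_right hac rfl).mul_right (Commute.sub_right hac hab))).eq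
  calc (c - a) * (c - b) * (a - b)
      = a * ((c - a) * (c - b) * (g + 1)) - (c - a) * (c - b) * (g + 1) * b := by
        simp only [← mul_assoc, h₁] at *
        simp only [mul_assoc _ g, add_mul, ← ag, mul_add, mul_sub, mul_one]
        simp only [mul_assoc, ag]
        abel
    _ = 0 := by simp [hr]

lemma sub_mul_sub_mul_sub_eq_zero_of_swap (hc : Commute (a - b) (a - c))
    (h₀ : (a - c) * (a - b) * (c - b) = 0) : (a - b) * (a - c) * (b - c) = 0 := by
  rw [hc.eq, ← neg_sub c b, mul_neg, h₀, neg_zero]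

/-- An element satisfying the quadratic relation of the `g_i` is left cancellable. -/
lemma eq_zero_of_mul_eq_zero_of_quadratic {F A : Type*} [Field F] [Ring A] [Algebra F A] {q : F}
    {e y x : A} (hq : q ≠ 0) (he : e * e = e)
    (hy : y * y = 1 + (q - 1) • e + (q - 1) • (e * y)) (hx : y * x = 0) : x = 0 := by
  have h₁ : x + (q - 1) • (e * x) = 0 := by
    simpa [add_mul, mul_assoc, hx] using (congrArg (· * x) hy).symm
  have h₂ : q • (e * x) = 0 := by
    have := congrArg (e * ·) h₁
    simp only [mul_add, mul_smul_comm, ← mul_assoc, he, mul_zero] at this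
    rw [← this, sub_smul, one_smul]
    abel
  have h₃ : e * x = 0 := (smul_eq_zero.mp h₂).resolve_left hq
  simpa [h₃] using h₁

end RingLemmas

section Generators

variable {d n : ℕ}

lemma zt_comm {i j : ℕ} (hi : 1 ≤ i) (hin : i ≤ n) (hj : 1 ≤ j) (hjn : j ≤ n) :
    zt d n i * zt d n j = zt d n j * zt d n i := by
  simpa [zt] using RingQuot.mkAlgHom_rel K (YTLRel.base (YRel.tcomm (d := d) i j hi hin hj hjn))

lemma zg_comm {i j : ℕ} (hi : 1 ≤ i) (hin : i + 1 ≤ n) (hj : 1 ≤ j) (hjn : j + 1 ≤ n)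
    (hfar : i + 1 < j ∨ j + 1 < i) :
    zg d n i * zg d n j = zg d n j * zg d n i := by
  simpa [zg] using
    RingQuot.mkAlgHom_rel K (YTLRel.base (YRel.commute (d := d) i j hi hin hj hjn hfar))

lemma zg_braid {i : ℕ} (hi : 1 ≤ i) (hin : i + 2 ≤ n) :
    zg d n i * zg d n (i + 1) * zg d n i = zg d n (i + 1) * zg d n i * zg d n (i + 1) := by
  simpa [zg] using RingQuot.mkAlgHom_rel K (YTLRel.base (YRel.braid (d := d) i hi hin))

lemma zg_tl {i : ℕ} (hi : 1 ≤ i) (hin : i + 2 ≤ n) :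
    zg d n i * zg d n (i + 1) * zg d n i + zg d n i * zg d n (i + 1) + zg d n (i + 1) * zg d n i +
      zg d n i + zg d n (i + 1) + 1 = 0 := by
  simpa [zg] using RingQuot.mkAlgHom_rel K (YTLRel.tl (d := d) i hi hin)

lemma zt_mul_zg {i j : ℕ} (hi : 1 ≤ i) (hin : i + 1 ≤ n) (hj : 1 ≤ j) (hjn : j ≤ n) :
    zt d n j * zg d n i = zg d n i * zt d n (swapIdx i j) := by
  simpa [zt, zg] using RingQuot.mkAlgHom_rel K (YTLRel.base (YRel.tg (d := d) i j hi hin hj hjn))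

lemma zt_mul_zg_self {i : ℕ} (hi : 1 ≤ i) (hin : i + 1 ≤ n) :
    zt d n i * zg d n i = zg d n i * zt d n (i + 1) := by
  simpa [swapIdx] using zt_mul_zg (d := d) hi hin hi (by omega)

lemma zt_succ_mul_zg {i : ℕ} (hi : 1 ≤ i) (hin : i + 1 ≤ n) :
    zt d n (i + 1) * zg d n i = zg d n i * zt d n i := by
  simpa [swapIdx] using zt_mul_zg (d := d) hi hin (by omega : 1 ≤ i + 1) hin

lemma zt_mul_zg_of_ne {i j : ℕ} (hi : 1 ≤ i) (hin : i + 1 ≤ n) (hj : 1 ≤ j) (hjn : j ≤ n)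
    (h : j ≠ i) (h' : j ≠ i + 1) : zt d n j * zg d n i = zg d n i * zt d n j := by
  simpa [swapIdx, h, h'] using zt_mul_zg (d := d) hi hin hj hjn

lemma zt_pow {j : ℕ} (hj : 1 ≤ j) (hjn : j ≤ n) : zt d n j ^ d = 1 := by
  simpa [zt] using RingQuot.mkAlgHom_rel K (YTLRel.base (YRel.torder (d := d) j hj hjn))

/-- The image of `e_i` in `YTL_{d,n}(u)`. -/
noncomputable def ze (d n i : ℕ) : YTL d n := RingQuot.mkAlgHom K (YTLRel d n) (ef d i)

lemma ze_eq (i : ℕ) : ze d n i =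
    (d : K)⁻¹ • ∑ s ∈ Finset.range d, zt d n i ^ s * zt d n (i + 1) ^ (d - s) := by
  simp [ze, ef, zt]

lemma zg_sq {i : ℕ} (hi : 1 ≤ i) (hin : i + 1 ≤ n) :
    zg d n i * zg d n i = 1 + (uu - 1) • ze d n i + (uu - 1) • (ze d n i * zg d n i) := by
  simpa [zg, ze, sq] using RingQuot.mkAlgHom_rel K (YTLRel.base (YRel.quad (d := d) i hi hin))

lemma zt_mul_ze {i : ℕ} (hi : 1 ≤ i) (hin : i + 1 ≤ n) :
    zt d n i * ze d n i = zt d n (i + 1) * ze d n i := by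
  have hc : Commute (zt d n i) (zt d n (i + 1)) := zt_comm hi (by omega) (by omega) hin
  have hsum : ∑ s ∈ Finset.range d, zt d n i ^ s * zt d n (i + 1) ^ (d - s) =
      (∑ s ∈ Finset.range d, zt d n i ^ s * zt d n (i + 1) ^ (d - 1 - s)) * zt d n (i + 1) := by
    rw [Finset.sum_mul]
    refine Finset.sum_congr rfl fun s hs => ?_
    rw [mul_assoc, ← pow_succ]
    congr 2
    have := Finset.mem_range.mp hs
    omega
  rw [← sub_eq_zero, ← sub_mul, ze_eq, hsum, mul_smul_comm, ← mul_assoc, hc.mul_geom_sum₂,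
    zt_pow hi (by omega), zt_pow (by omega) hin]
  simp

lemma ze_mul_self (hd : 1 ≤ d) {i : ℕ} (hi : 1 ≤ i) (hin : i + 1 ≤ n) :
    ze d n i * ze d n i = ze d n i := by
  have hpow (s : ℕ) : zt d n i ^ s * ze d n i = zt d n (i + 1) ^ s * ze d n i := by
    have hc : Commute (zt d n i) (zt d n (i + 1)) := zt_comm hi (by omega) (by omega) hin
    induction s with
    | zero => simp
    | succ s ih =>
      rw [pow_succ, mul_assoc, zt_mul_ze hi hin, ← mul_assoc, (hc.pow_left s).eq, mul_assoc, ih,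
        ← mul_assoc, ← pow_succ']
  have hd' : (d : K) ≠ 0 := Nat.cast_ne_zero.mpr (by omega)
  have hterm : ∀ s ∈ Finset.range d,
      zt d n i ^ s * zt d n (i + 1) ^ (d - s) * ze d n i = ze d n i := by
    intro s hs
    have hc : Commute (zt d n i) (zt d n (i + 1)) := zt_comm hi (by omega) (by omega) hin
    rw [(hc.pow_pow s (d - s)).eq, mul_assoc, hpow, ← mul_assoc, ← pow_add,
      Nat.sub_add_cancel (Finset.mem_range.mp hs).le, zt_pow (by omega) hin, one_mul]
  nth_rewrite 1 [ze_eq]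
  rw [smul_mul_assoc, Finset.sum_mul, Finset.sum_congr rfl hterm, Finset.sum_const,
    Finset.card_range, ← Nat.cast_smul_eq_nsmul K, smul_smul, inv_mul_cancel₀ hd', one_smul]

/-- Each `g_i` is left cancellable. -/
lemma eq_zero_of_zg_mul_eq_zero (hd : 1 ≤ d) {i : ℕ} (hi : 1 ≤ i) (hin : i + 1 ≤ n) {x : YTL d n}
    (hx : zg d n i * x = 0) : x = 0 :=
  eq_zero_of_mul_eq_zero_of_quadratic RatFunc.X_ne_zero (ze_mul_self hd hi hin) (zg_sq hi hin) hx

lemma zt_sub_mul_zt_sub_mul_zg_add_one (hd : 1 ≤ d) {i j : ℕ} (hi : 1 ≤ i) (hin : i + 1 ≤ n)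
    (hj : 1 ≤ j) (hjn : j ≤ n) :
    (zt d n j - zt d n i) * (zt d n j - zt d n (i + 1)) * (zg d n i + 1) = 0 := by
  have move {j j' m : ℕ} (hm : 1 ≤ m) (hmn : m + 1 ≤ n) (hfar : i + 1 < m ∨ m + 1 < i)
      (hjm : zt d n j * zg d n m = zg d n m * zt d n j')
      (h : (zt d n j - zt d n i) * (zt d n j - zt d n (i + 1)) * (zg d n i + 1) = 0) :
      (zt d n j' - zt d n i) * (zt d n j' - zt d n (i + 1)) * (zg d n i + 1) = 0 := by
    refine eq_zero_of_zg_mul_eq_zero hd hm hmn ?_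
    have h₁ : SemiconjBy (zg d n m) (zt d n j') (zt d n j) := hjm.symm
    have h₂ : SemiconjBy (zg d n m) (zt d n i) (zt d n i) :=
      (zt_mul_zg_of_ne hm hmn hi (by omega) (by omega) (by omega)).symm
    have h₃ : SemiconjBy (zg d n m) (zt d n (i + 1)) (zt d n (i + 1)) :=
      (zt_mul_zg_of_ne hm hmn (by omega) hin (by omega) (by omega)).symm
    have h₄ : SemiconjBy (zg d n m) (zg d n i) (zg d n i) := (zg_comm hi hin hm hmn hfar).symm
    rw [(((h₁.sub_right h₂).mul_right (h₁.sub_right h₃)).mul_right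
      (h₄.add_right (SemiconjBy.one_right _))).eq, h, zero_mul]
  have neighbour {m : ℕ} (hm : 1 ≤ m) (hmn : m + 2 ≤ n) :
      (zt d n (m + 2) - zt d n m) * (zt d n (m + 2) - zt d n (m + 1)) * (zg d n m + 1) = 0 ∧
      (zt d n m - zt d n (m + 1)) * (zt d n m - zt d n (m + 2)) * (zg d n (m + 1) + 1) = 0 := by
    have hab := zt_comm (d := d) (n := n) (i := m) (j := m + 1) hm (by omega) (by omega) (by omega)
    have hac := zt_comm (d := d) (n := n) (i := m) (j := m + 2) hm (by omega) (by omega) (by omega)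
    have hbc := zt_comm (d := d) (n := n) (i := m + 1) (j := m + 2)
      (by omega) (by omega) (by omega) (by omega)
    have ag := zt_mul_zg_self (d := d) (n := n) (i := m) hm (by omega)
    have bg := zt_succ_mul_zg (d := d) (n := n) (i := m) hm (by omega)
    have cg := zt_mul_zg_of_ne (d := d) (n := n) (i := m) (j := m + 2)
      hm (by omega) (by omega) (by omega) (by omega) (by omega)
    have ah := zt_mul_zg_of_ne (d := d) (n := n) (i := m + 1) (j := m)
      (by omega) (by omega) (by omega) (by omega) (by omega) (by omega)
    have bh := zt_mul_zg_self (d := d) (n := n) (i := m + 1) (by omega) (by omega)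
    have ch := zt_succ_mul_zg (d := d) (n := n) (i := m + 1) (by omega) (by omega)
    exact ⟨sub_mul_sub_mul_left_add_one hab hbc ag cg bh (zg_tl hm hmn),
      sub_mul_sub_mul_right_add_one hab hac hbc bg ah ch (zg_braid hm hmn) (zg_tl hm hmn)⟩
  rcases lt_trichotomy j i with hlt | rfl | hgt
  · obtain ⟨m, rfl⟩ : ∃ m, i = m + 1 := ⟨i - 1, by omega⟩
    induction (show j ≤ m by omega) using Nat.decreasingInduction with
    | self => exact (neighbour hj (by omega)).2
    | of_succ k hk ih =>
      exact move hj (by omega) (by omega) (zt_succ_mul_zg hj (by omega))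
        (ih (by omega) (by omega) (by omega))
  · simp
  · induction j, (show i + 1 ≤ j by omega) using Nat.le_induction with
    | base => simp
    | succ k hk ih =>
      rcases hk.eq_or_lt with rfl | hk'
      · exact (neighbour hi (by omega)).1
      · exact move (by omega) (by omega) (by omega) (zt_mul_zg_self (by omega) (by omega))
          (ih (by omega) (by omega) (by omega))

lemma zt_sub_mul_sub_mul_sub_of_lt (hd : 1 ≤ d) {i j k : ℕ} (hi : 1 ≤ i) (hin : i ≤ n)
    (hj : 1 ≤ j) (hjk : j < k) (hkn : k ≤ n) :
    (zt d n i - zt d n j) * (zt d n i - zt d n k) * (zt d n j - zt d n k) = 0 := by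
  induction k, (show j + 1 ≤ k by omega) using Nat.le_induction generalizing i with
  | base =>
    exact sub_mul_sub_mul_sub_eq_zero (zt_comm hj (by omega) (by omega) hkn)
      (zt_comm hj (by omega) hi hin) (zt_mul_zg_self hj hkn)
      (zt_sub_mul_zt_sub_mul_zg_add_one hd hj hkn hi hin)
  | succ k hk ih =>
    have hk₁ : 1 ≤ k := by omega
    obtain ⟨l, hl, hln, hli⟩ : ∃ l, 1 ≤ l ∧ l ≤ n ∧ swapIdx k l = i := by
      refine ⟨swapIdx k i, ?_⟩
      unfold swapIdx
      grind
    refine eq_zero_of_zg_mul_eq_zero hd hk₁ hkn ?_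
    have h₁ : SemiconjBy (zg d n k) (zt d n i) (zt d n l) := by
      rw [← hli]
      exact (zt_mul_zg hk₁ hkn hl hln).symm
    have h₂ : SemiconjBy (zg d n k) (zt d n j) (zt d n j) :=
      (zt_mul_zg_of_ne hk₁ hkn hj (by omega) (by omega) (by omega)).symm
    have h₃ : SemiconjBy (zg d n k) (zt d n (k + 1)) (zt d n k) := (zt_mul_zg_self hk₁ hkn).symm
    rw [(((h₁.sub_right h₂).mul_right (h₁.sub_right h₃)).mul_right (h₂.sub_right h₃)).eq,
      ih hl hln (by omega) (by omega), zero_mul]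

end Generators

theorem stmt16 (d n : ℕ) (hd : 1 ≤ d) (hn : 3 ≤ n) :
    (∀ i j k, 1 ≤ i → i ≤ n → 1 ≤ j → j ≤ n → 1 ≤ k → k ≤ n →
      (zt d n i - zt d n j) * (zt d n i - zt d n k) * (zt d n j - zt d n k) = 0) ∧
    (∀ i j, 1 ≤ i → i + 1 ≤ n → 1 ≤ j → j ≤ n →
      (zt d n j - zt d n i) * (zt d n j - zt d n (i + 1)) * (zg d n i + 1) = 0) := by
  refine ⟨fun i j k hi hin hj hjn hk hkn => ?_,
    fun i j hi hin hj hjn => zt_sub_mul_zt_sub_mul_zg_add_one hd hi hin hj hjn⟩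
  rcases lt_trichotomy j k with hlt | rfl | hgt
  · exact zt_sub_mul_sub_mul_sub_of_lt hd hi hin hj hlt hkn
  · simp
  · have hij : Commute (zt d n i) (zt d n j) := zt_comm hi hin hj hjn
    have hik : Commute (zt d n i) (zt d n k) := zt_comm hi hin hk hkn
    have hjk : Commute (zt d n j) (zt d n k) := zt_comm hj hjn hk hkn
    have hc : Commute (zt d n i - zt d n j) (zt d n i - zt d n k) :=
      ((Commute.refl _).sub_right hik).sub_left (hij.symm.sub_right hjk)
    exact sub_mul_sub_mul_sub_eq_zero_of_swap hc
      (zt_sub_mul_sub_mul_sub_of_lt hd hi hin hk hgt hjn)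
end
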